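/- arXiv:2605.19822 — 2 statements merged into one kernel-verified Lean document; each statement's English description precedes it below -/
import Mathlib

section
/- Combined compression bound for the information bottleneck: let p_X be a strictly positive pmf on a finite type X, let k assign to each x a pmf k(·|x) on a finite type Z, and let m assign to each z a pmf m(·|z) on a finite type W, and form the Markov-chain joint pmf p(x,z,w) = p_X(x)·k(z|x)·m(w|z). Then for every strictly positive pmf q on Z, the mutual information between X and W satisfies I(X;W) ≤ Σ_x p_X(x)·D( k(·|x) ‖ q ). -/
/-!
Write `r x` for the law of `W` given `X = x`, and `p_W`, `q_W` for the laws of `W` induced by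
`p_X` and `q`. Then `I(X;W) = ∑ p_X(x) D(r x ‖ p_W)`. By Topsøe's compensation identity, replacing
the true marginal `p_W` by `q_W` in this sum adds `D(p_W ‖ q_W) ≥ 0`. Finally `r x` and `q_W` are
the images of `k x` and `q` under the same channel `m`, so `D(r x ‖ q_W) ≤ D(k x ‖ q)` by data
processing. Nonnegativity and data processing both come from the log-sum inequality, i.e. from
Jensen's inequality for `t ↦ t log t`.
-/

open Finset Matrix Real

section FiniteDivergence

variable {ι κ : Type*}

theorem sum_mul_log_sum_div_sum_le (s : Finset ι) {a b : ι → ℝ} (ha : ∀ i ∈ s, 0 ≤ a i)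
    (hb : ∀ i ∈ s, 0 ≤ b i) (hab : ∀ i ∈ s, b i = 0 → a i = 0) :
    (∑ i ∈ s, a i) * log ((∑ i ∈ s, a i) / ∑ i ∈ s, b i) ≤ ∑ i ∈ s, a i * log (a i / b i) := by
  rcases (sum_nonneg hb).eq_or_lt with hB | hB
  · have hb_zero := (sum_eq_zero_iff_of_nonneg hb).1 hB.symm
    rw [← hB, div_zero, log_zero, mul_zero, sum_eq_zero]
    intro i hi
    rw [hb_zero i hi, div_zero, log_zero, mul_zero]
  · have hcancel : ∀ i ∈ s, b i * (a i / b i) = a i := fun i hi =>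
      mul_div_cancel_of_imp' (hab i hi)
    have hmean : s.centerMass b (fun i => a i / b i) = (∑ i ∈ s, a i) / ∑ i ∈ s, b i := by
      simp only [centerMass, smul_eq_mul]
      rw [sum_congr rfl hcancel, inv_mul_eq_div]
    have hjensen := convexOn_mul_log.map_centerMass_le hb hB
      fun i hi => Set.mem_Ici.2 (div_nonneg (ha i hi) (hb i hi))
    rw [hmean] at hjensen
    simp only [centerMass, Function.comp_apply, smul_eq_mul, ← mul_assoc] at hjensen
    rw [inv_mul_eq_div, div_mul_eq_mul_div, div_le_div_iff_of_pos_right hB] at hjensen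
    exact hjensen.trans_eq (sum_congr rfl fun i hi => by rw [hcancel i hi])

variable [Fintype ι]

/-- The Kullback–Leibler divergence `D(p ‖ q)` of finite nonnegative weights, as a real number.
Terms with `p i = 0` vanish as they should, but so do terms with `q i = 0`, so the value is
meaningful only if `p` vanishes wherever `q` does. -/
noncomputable def discreteKLDiv (p q : ι → ℝ) : ℝ :=
  ∑ i, p i * log (p i / q i)

theorem discreteKLDiv_nonneg {p q : ι → ℝ} (hp : ∀ i, 0 ≤ p i) (hq : ∀ i, 0 ≤ q i)
    (hpq : ∀ i, q i = 0 → p i = 0) (hsum : ∑ i, q i ≤ ∑ i, p i) : 0 ≤ discreteKLDiv p q := by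
  refine le_trans ?_ (sum_mul_log_sum_div_sum_le univ (fun i _ => hp i) (fun i _ => hq i)
    fun i _ => hpq i)
  rcases (sum_nonneg fun i _ => hq i : 0 ≤ ∑ i, q i).eq_or_lt with hQ | hQ
  · rw [← hQ, div_zero, log_zero, mul_zero]
  · exact mul_nonneg (hQ.le.trans hsum) (log_nonneg ((one_le_div hQ).2 hsum))

/-! A channel is a matrix `M` whose row `M i` is the output law for input `i`, so that `p ᵥ* M` is
the output law for a random input with law `p`. -/

variable {p q : ι → ℝ} {M : Matrix ι κ ℝ}

theorem vecMul_apply_nonneg (hp : ∀ i, 0 ≤ p i) (hM : ∀ i j, 0 ≤ M i j) (j : κ) :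
    0 ≤ (p ᵥ* M) j :=
  sum_nonneg fun i _ => mul_nonneg (hp i) (hM i j)

theorem vecMul_apply_eq_zero_iff (hp : ∀ i, 0 ≤ p i) (hM : ∀ i j, 0 ≤ M i j) {j : κ} :
    (p ᵥ* M) j = 0 ↔ ∀ i, p i * M i j = 0 :=
  (sum_eq_zero_iff_of_nonneg fun i _ => mul_nonneg (hp i) (hM i j)).trans <| by
    simp only [mem_univ, true_imp_iff]

theorem vecMul_apply_eq_zero_of_absolutelyContinuous (hq : ∀ i, 0 ≤ q i) (hM : ∀ i j, 0 ≤ M i j)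
    (hpq : ∀ i, q i = 0 → p i = 0) {j : κ} (hj : (q ᵥ* M) j = 0) : (p ᵥ* M) j = 0 :=
  sum_eq_zero fun i _ => mul_eq_zero.2 <|
    (mul_eq_zero.1 ((vecMul_apply_eq_zero_iff hq hM).1 hj i)).imp_left (hpq i)

variable [Fintype κ]

theorem sum_vecMul_of_row_sum_eq_one (p : ι → ℝ) (hM : ∀ i, ∑ j, M i j = 1) :
    ∑ j, (p ᵥ* M) j = ∑ i, p i := by
  simp only [vecMul, dotProduct]
  rw [sum_comm]
  simp only [← mul_sum, hM, mul_one]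

theorem discreteKLDiv_vecMul_le (hp : ∀ i, 0 ≤ p i) (hq : ∀ i, 0 ≤ q i)
    (hpq : ∀ i, q i = 0 → p i = 0) (hM0 : ∀ i j, 0 ≤ M i j) (hM1 : ∀ i, ∑ j, M i j = 1) :
    discreteKLDiv (p ᵥ* M) (q ᵥ* M) ≤ discreteKLDiv p q := by
  have hterm : ∀ i j, p i * M i j * log (p i * M i j / (q i * M i j)) =
      p i * log (p i / q i) * M i j := fun i j => by
    rcases eq_or_ne (M i j) 0 with h | h
    · simp [h]
    · rw [mul_div_mul_right _ _ h, mul_right_comm]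
  calc discreteKLDiv (p ᵥ* M) (q ᵥ* M)
      ≤ ∑ j, ∑ i, p i * M i j * log (p i * M i j / (q i * M i j)) :=
        sum_le_sum fun j _ => sum_mul_log_sum_div_sum_le univ
          (fun i _ => mul_nonneg (hp i) (hM0 i j)) (fun i _ => mul_nonneg (hq i) (hM0 i j))
          fun i _ h => mul_eq_zero.2 ((mul_eq_zero.1 h).imp_left (hpq i))
    _ = ∑ j, ((fun i => p i * log (p i / q i)) ᵥ* M) j := by
        simp only [hterm, vecMul, dotProduct]
    _ = discreteKLDiv p q := sum_vecMul_of_row_sum_eq_one _ hM1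

/-- The mutual information of the two coordinates of a joint pmf on `ι × κ`, given in curried
form. -/
noncomputable def discreteMutualInfo (P : ι → κ → ℝ) : ℝ :=
  ∑ i, ∑ j, P i j * log (P i j / ((∑ j', P i j') * ∑ i', P i' j))

theorem discreteMutualInfo_eq_sum_mul_discreteKLDiv (p : ι → ℝ) (hM : ∀ i, ∑ j, M i j = 1) :
    discreteMutualInfo (fun i j => p i * M i j) = ∑ i, p i * discreteKLDiv (M i) (p ᵥ* M) := by
  simp only [discreteMutualInfo, discreteKLDiv, ← mul_sum, hM, mul_one]
  refine sum_congr rfl fun i _ => ?_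
  rcases eq_or_ne (p i) 0 with h | h
  · simp [h]
  · simp only [mul_div_mul_left _ _ h, mul_assoc, ← mul_sum, vecMul, dotProduct]

theorem sum_mul_discreteKLDiv_eq_add (hp : ∀ i, 0 ≤ p i) (hM : ∀ i j, 0 ≤ M i j) {s : κ → ℝ}
    (hMs : ∀ i j, s j = 0 → M i j = 0) :
    ∑ i, p i * discreteKLDiv (M i) s =
      ∑ i, p i * discreteKLDiv (M i) (p ᵥ* M) + discreteKLDiv (p ᵥ* M) s := by
  have hterm : ∀ i j, p i * (M i j * log (M i j / s j)) =
      p i * (M i j * log (M i j / (p ᵥ* M) j)) + p i * M i j * log ((p ᵥ* M) j / s j) := by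
    intro i j
    rcases eq_or_ne (p i * M i j) 0 with h | h
    · simp only [← mul_assoc, h, zero_mul, add_zero]
    · have hMij : M i j ≠ 0 := right_ne_zero_of_mul h
      have hsj : s j ≠ 0 := mt (hMs i j) hMij
      have hpM : (p ᵥ* M) j ≠ 0 := fun h0 => h ((vecMul_apply_eq_zero_iff hp hM).1 h0 i)
      rw [log_div hMij hsj, log_div hMij hpM, log_div hpM hsj]
      ring
  have hmarginal : discreteKLDiv (p ᵥ* M) s =
      ∑ i, ∑ j, p i * M i j * log ((p ᵥ* M) j / s j) := by
    rw [sum_comm]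
    simp only [← sum_mul]
    rfl
  rw [hmarginal, ← sum_add_distrib]
  simp only [discreteKLDiv, mul_sum, hterm, sum_add_distrib]

theorem discreteMutualInfo_le_sum_mul_discreteKLDiv (hp : ∀ i, 0 ≤ p i)
    (hM0 : ∀ i j, 0 ≤ M i j) (hM1 : ∀ i, ∑ j, M i j = 1) {s : κ → ℝ} (hs : ∀ j, 0 ≤ s j)
    (hMs : ∀ i j, s j = 0 → M i j = 0) (hsum : ∑ j, s j ≤ ∑ i, p i) :
    discreteMutualInfo (fun i j => p i * M i j) ≤ ∑ i, p i * discreteKLDiv (M i) s := by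
  rw [discreteMutualInfo_eq_sum_mul_discreteKLDiv p hM1, sum_mul_discreteKLDiv_eq_add hp hM0 hMs]
  refine le_add_of_nonneg_right (discreteKLDiv_nonneg (vecMul_apply_nonneg hp hM0) hs ?_ ?_)
  · exact fun j hj => sum_eq_zero fun i _ => mul_eq_zero_of_right _ (hMs i j hj)
  · rwa [sum_vecMul_of_row_sum_eq_one p hM1]

end FiniteDivergence

/-- Combined compression bound for the information bottleneck: for the Markov
chain `X → Z → W` and any strictly positive pmf `q` on `Z`,
`I(X;W) ≤ Σ_x p_X(x)·D(k(·|x) ‖ q)`. -/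
theorem compression_bound
    {X Z W : Type*} [Fintype X] [Fintype Z] [Fintype W]
    (pX : X → ℝ) (k : X → Z → ℝ) (m : Z → W → ℝ)
    (hX0 : ∀ x, 0 < pX x) (hX1 : ∑ x : X, pX x = 1)
    (hk0 : ∀ x z, 0 ≤ k x z) (hk1 : ∀ x, ∑ z : Z, k x z = 1)
    (hm0 : ∀ z w, 0 ≤ m z w) (hm1 : ∀ z, ∑ w : W, m z w = 1)
    (q : Z → ℝ) (hq0 : ∀ z, 0 < q z) (hq1 : ∑ z : Z, q z = 1) :
    (∑ x : X, ∑ w : W, (∑ z : Z, pX x * k x z * m z w) *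
        Real.log ((∑ z : Z, pX x * k x z * m z w) /
          ((∑ w' : W, ∑ z : Z, pX x * k x z * m z w') *
            (∑ x' : X, ∑ z : Z, pX x' * k x' z * m z w))))
      ≤
    (∑ x : X, pX x * (∑ z : Z, k x z * Real.log (k x z / q z))) := by
  let K : Matrix X Z ℝ := .of k
  let M : Matrix Z W ℝ := .of m
  have hjoint : (fun x w => ∑ z, pX x * k x z * m z w) = fun x w => pX x * (K * M) x w := by
    simp only [K, M, mul_apply, of_apply, mul_sum, mul_assoc]
  have hkq : ∀ x z, q z = 0 → k x z = 0 := fun x z hz => absurd hz (hq0 z).ne'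
  have hq0' : ∀ z, 0 ≤ q z := fun z => (hq0 z).le
  calc discreteMutualInfo (fun x w => ∑ z, pX x * k x z * m z w)
      ≤ ∑ x, pX x * discreteKLDiv (k x ᵥ* M) (q ᵥ* M) := by
        rw [hjoint]
        exact discreteMutualInfo_le_sum_mul_discreteKLDiv (fun x => (hX0 x).le)
          (fun x => vecMul_apply_nonneg (hk0 x) hm0)
          (fun x => (sum_vecMul_of_row_sum_eq_one (k x) hm1).trans (hk1 x))
          (vecMul_apply_nonneg hq0' hm0)
          (fun x _ => vecMul_apply_eq_zero_of_absolutelyContinuous hq0' hm0 (hkq x))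
          ((sum_vecMul_of_row_sum_eq_one q hm1).trans (hq1.trans hX1.symm)).le
    _ ≤ ∑ x, pX x * discreteKLDiv (k x) q := sum_le_sum fun x _ =>
        mul_le_mul_of_nonneg_left (discreteKLDiv_vecMul_le (hk0 x) hq0' (hkq x) hm0 hm1) (hX0 x).le
end

section
/- Label-aggregated variational representation of the expected Jensen–Shannon divergence: let X and Y be finite types, let w be a strictly positive pmf on Y, and for each y ∈ Y let P_y and Q_y be strictly positive pmfs on X. Then Σ_y w(y)·JS(P_y‖Q_y) = log 2 + (1/2)·sup_d Σ_y w(y)·( Σ_x P_y(x)·log d(x,y) + Σ_x Q_y(x)·log(1−d(x,y)) ), where the supremum ranges over all functions d : X × Y → (0,1), and it is attained at d*(x,y) = P_y(x)/(P_y(x)+Q_y(x)). -/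
/-!
The objective splits over points: at each `(x, y)` it is `a * log t + b * log (1 - t)` with
`a = P y x`, `b = Q y x`, `t = d (x, y)`. The tangent line of `log` at `a / (a + b)` bounds the
first term, the one at `b / (a + b)` bounds the second, and the two linear corrections cancel, so
`t = a / (a + b)` is optimal. The optimal value is `D(P ‖ P + Q) + D(Q ‖ P + Q)`, which differs from
`2 * JS` only by the factor `2` in the midpoint `(P + Q) / 2`, that is, by `2 * log 2`.
-/

section PointwiseBound

variable {a b s t : ℝ}

lemma mul_log_le_mul_log_div_add (ha : 0 ≤ a) (hs : 0 < s) (ht : 0 < t) :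
    a * Real.log t ≤ a * Real.log (a / s) + (t * s - a) := by
  rcases ha.eq_or_lt with rfl | ha
  · simpa using (mul_pos ht hs).le
  have tangent : Real.log t ≤ Real.log (a / s) + (t / (a / s) - 1) := by
    have h := Real.log_le_sub_one_of_pos (div_pos ht (div_pos ha hs))
    rw [Real.log_div ht.ne' (div_pos ha hs).ne'] at h
    linarith
  calc a * Real.log t
      ≤ a * (Real.log (a / s) + (t / (a / s) - 1)) := mul_le_mul_of_nonneg_left tangent ha.le
    _ = a * Real.log (a / s) + (t * s - a) := by field_simp

lemma mul_log_add_mul_log_one_sub_le (ha : 0 ≤ a) (hb : 0 ≤ b) (ht : t ∈ Set.Ioo 0 1) :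
    a * Real.log t + b * Real.log (1 - t) ≤
      a * Real.log (a / (a + b)) + b * Real.log (b / (a + b)) := by
  rcases (add_nonneg ha hb).eq_or_lt with hab | hab
  · obtain ⟨rfl, rfl⟩ := (add_eq_zero_iff_of_nonneg ha hb).mp hab.symm
    simp
  linarith [mul_log_le_mul_log_div_add ha hab ht.1,
    mul_log_le_mul_log_div_add hb hab (sub_pos.mpr ht.2)]

end PointwiseBound

section Divergence

variable {X : Type*} {p q : X → ℝ}

/-- The optimal discriminator `p / (p + q)` between `p` and `q`: the posterior probability
that `x` was drawn from `p` under equal priors. Where `p x + q x = 0`, its value is the junk `0`. -/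
noncomputable def optimalDiscriminator (p q : X → ℝ) (x : X) : ℝ :=
  p x / (p x + q x)

lemma optimalDiscriminator_mem_Ioo {x : X} (hp : 0 < p x) (hq : 0 < q x) :
    optimalDiscriminator p q x ∈ Set.Ioo 0 1 :=
  ⟨div_pos hp (add_pos hp hq), (div_lt_one (add_pos hp hq)).mpr (lt_add_of_pos_right _ hq)⟩

variable [Fintype X]

/-- The Kullback–Leibler divergence `D(p ‖ q)` of two weight functions on a finite type, which need
not be normalized. Terms with `p x = 0` contribute `0`; it is meaningful only if `p` vanishes
wherever `q` does. -/
noncomputable def finiteKLDiv (p q : X → ℝ) : ℝ :=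
  ∑ x, p x * Real.log (p x / q x)

/-- The Jensen–Shannon divergence `JS(p ‖ q)`, the mean divergence of `p` and `q` from their
midpoint. -/
noncomputable def finiteJSDiv (p q : X → ℝ) : ℝ :=
  1 / 2 * finiteKLDiv p (fun x => (p x + q x) / 2) +
    1 / 2 * finiteKLDiv q (fun x => (p x + q x) / 2)

/-- The log-likelihood objective of a discriminator `d`, where `d x` is the probability it assigns
to `x` having been drawn from `p` rather than from `q`. -/
noncomputable def discriminatorObjective (p q d : X → ℝ) : ℝ :=
  (∑ x, p x * Real.log (d x)) + ∑ x, q x * Real.log (1 - d x)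

lemma finiteKLDiv_div_const {c : ℝ} (hc : c ≠ 0) (hpq : ∀ x, q x = 0 → p x = 0) :
    finiteKLDiv p (fun x => q x / c) = (∑ x, p x) * Real.log c + finiteKLDiv p q := by
  simp only [finiteKLDiv, Finset.sum_mul, ← Finset.sum_add_distrib]
  refine Finset.sum_congr rfl fun x _ => ?_
  by_cases hpx : p x = 0
  · simp [hpx]
  have hqx : q x ≠ 0 := mt (hpq x) hpx
  rw [div_div_eq_mul_div, mul_div_right_comm, Real.log_mul (div_ne_zero hpx hqx) hc]
  ring

lemma discriminatorObjective_optimalDiscriminator (hpq : ∀ x, p x + q x = 0 → q x = 0) :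
    discriminatorObjective p q (optimalDiscriminator p q) =
      finiteKLDiv p (p + q) + finiteKLDiv q (p + q) := by
  refine congrArg (finiteKLDiv p (p + q) + ·) (Finset.sum_congr rfl fun x _ => ?_)
  by_cases hqx : q x = 0
  · simp [hqx]
  have hsum : p x + q x ≠ 0 := mt (hpq x) hqx
  rw [optimalDiscriminator, one_sub_div hsum, add_sub_cancel_left, Pi.add_apply]

lemma discriminatorObjective_le_optimalDiscriminator (hp : ∀ x, 0 ≤ p x) (hq : ∀ x, 0 ≤ q x)
    {d : X → ℝ} (hd : ∀ x, d x ∈ Set.Ioo 0 1) :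
    discriminatorObjective p q d ≤ discriminatorObjective p q (optimalDiscriminator p q) := by
  rw [discriminatorObjective_optimalDiscriminator fun x hx =>
    ((add_eq_zero_iff_of_nonneg (hp x) (hq x)).mp hx).2]
  simp only [discriminatorObjective, finiteKLDiv, ← Finset.sum_add_distrib]
  exact Finset.sum_le_sum fun x _ => mul_log_add_mul_log_one_sub_le (hp x) (hq x) (hd x)

lemma finiteJSDiv_eq_log_two_add_discriminatorObjective (hp : ∀ x, 0 ≤ p x) (hq : ∀ x, 0 ≤ q x)
    (hp_sum : ∑ x, p x = 1) (hq_sum : ∑ x, q x = 1) :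
    finiteJSDiv p q =
      Real.log 2 + 1 / 2 * discriminatorObjective p q (optimalDiscriminator p q) := by
  have sum_eq_zero (x : X) (hx : p x + q x = 0) : p x = 0 ∧ q x = 0 :=
    (add_eq_zero_iff_of_nonneg (hp x) (hq x)).mp hx
  have hp_mid : finiteKLDiv p (fun x => (p x + q x) / 2) =
      Real.log 2 + finiteKLDiv p (p + q) := by
    simpa only [hp_sum, one_mul, Pi.add_apply] using
      finiteKLDiv_div_const (q := p + q) two_ne_zero fun x hx => (sum_eq_zero x hx).1
  have hq_mid : finiteKLDiv q (fun x => (p x + q x) / 2) =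
      Real.log 2 + finiteKLDiv q (p + q) := by
    simpa only [hq_sum, one_mul, Pi.add_apply] using
      finiteKLDiv_div_const (q := p + q) two_ne_zero fun x hx => (sum_eq_zero x hx).2
  rw [finiteJSDiv, hp_mid, hq_mid,
    discriminatorObjective_optimalDiscriminator fun x hx => (sum_eq_zero x hx).2]
  ring

end Divergence

/-- Label-aggregated variational representation of the expected Jensen–Shannon
divergence: the supremum of the label-weighted discrimination objective over
conditional discriminators `d : X × Y → (0,1)` is attained at
`d*(x,y) = P_y(x)/(P_y(x)+Q_y(x))`, and
`Σ_y w(y)·JS(P_y‖Q_y) = log 2 + (1/2)·sup_d (objective)`. -/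
theorem expected_js_variational_representation
    {X Y : Type*} [Fintype X] [Fintype Y]
    (w : Y → ℝ) (hw0 : ∀ y, 0 < w y) (hw1 : ∑ y : Y, w y = 1)
    (P Q : Y → X → ℝ)
    (hP0 : ∀ y x, 0 < P y x) (hP1 : ∀ y, ∑ x : X, P y x = 1)
    (hQ0 : ∀ y x, 0 < Q y x) (hQ1 : ∀ y, ∑ x : X, Q y x = 1) :
    IsGreatest
      {v : ℝ | ∃ d : X × Y → ℝ, (∀ x y, 0 < d (x, y) ∧ d (x, y) < 1) ∧
        v = ∑ y : Y, w y *
          ((∑ x : X, P y x * Real.log (d (x, y)))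
            + (∑ x : X, Q y x * Real.log (1 - d (x, y))))}
      (∑ y : Y, w y *
        ((∑ x : X, P y x * Real.log (P y x / (P y x + Q y x)))
          + (∑ x : X, Q y x * Real.log (1 - P y x / (P y x + Q y x)))))
    ∧
    (∑ y : Y, w y *
        ((1 / 2) * (∑ x : X, P y x * Real.log (P y x / ((P y x + Q y x) / 2)))
          + (1 / 2) * (∑ x : X, Q y x * Real.log (Q y x / ((P y x + Q y x) / 2)))))
      = Real.log 2 + (1 / 2) *
        (∑ y : Y, w y *
          ((∑ x : X, P y x * Real.log (P y x / (P y x + Q y x)))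
            + (∑ x : X, Q y x * Real.log (1 - P y x / (P y x + Q y x))))) := by
  refine ⟨⟨⟨fun z => optimalDiscriminator (P z.2) (Q z.2) z.1,
    fun x y => optimalDiscriminator_mem_Ioo (hP0 y x) (hQ0 y x), rfl⟩, ?_⟩, ?_⟩
  · rintro _ ⟨d, hd, rfl⟩
    exact Finset.sum_le_sum fun y _ => mul_le_mul_of_nonneg_left
      (discriminatorObjective_le_optimalDiscriminator (fun x => (hP0 y x).le)
        (fun x => (hQ0 y x).le) fun x => hd x y) (hw0 y).le
  · let value (y : Y) := discriminatorObjective (P y) (Q y) (optimalDiscriminator (P y) (Q y))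
    calc ∑ y, w y * finiteJSDiv (P y) (Q y)
        = ∑ y, w y * (Real.log 2 + 1 / 2 * value y) :=
          Finset.sum_congr rfl fun y _ => congrArg (w y * ·) <|
            finiteJSDiv_eq_log_two_add_discriminatorObjective (fun x => (hP0 y x).le)
              (fun x => (hQ0 y x).le) (hP1 y) (hQ1 y)
      _ = Real.log 2 + 1 / 2 * ∑ y, w y * value y := by
          simp only [mul_add, Finset.sum_add_distrib, ← Finset.sum_mul, hw1, one_mul,
            mul_left_comm (w _), ← Finset.mul_sum]
end
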